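/- Let A be a finite distributive nearlattice. For a ∈ A define ê(a) = {x ∈ Irr(A) : a ≰ x}, and let N(S(A)) be the collection of all downsets U of the poset Irr(A) such that the set {x ∈ Irr(A) : x ∉ U} has a greatest lower bound in A (for U = Irr(A) this is the empty meet, equal to 1). Then ê is an order isomorphism from A onto ⟨N(S(A)), ⊆⟩: each ê(a) is a downset of Irr(A) lying in N(S(A)); ê is injective; every U ∈ N(S(A)) equals ê(a) for some a ∈ A; and for all a, b ∈ A, a ≤ b iff ê(a) ⊆ ê(b). In particular ê(a ∨ b) = ê(a) ∪ ê(b), ê(1) is the top of N(S(A)), and ê(a ∧ b) = ê(a) ∩ ê(b) whenever a ∧ b exists in A. -/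

import Mathlib

/-- In a join-semilattice, any two elements with a common lower bound have a
greatest lower bound. -/
def HasPartialMeets (A : Type*) [SemilatticeSup A] : Prop :=
  ∀ x y : A, (∃ z, z ≤ x ∧ z ≤ y) → ∃ m, IsGLB ({x, y} : Set A) m

/-- Every principal upset is distributive. -/
def UpsetDistrib (A : Type*) [SemilatticeSup A] : Prop :=
  ∀ a x y z m₁ m₂ m₃ : A, a ≤ x → a ≤ y → a ≤ z →
    IsGLB ({x, y ⊔ z} : Set A) m₁ → IsGLB ({x, y} : Set A) m₂ →
    IsGLB ({x, z} : Set A) m₃ → m₁ = m₂ ⊔ m₃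

/-- A meet-irreducible element of a nearlattice. -/
def IrrElt {A : Type*} [SemilatticeSup A] [OrderTop A] (a : A) : Prop :=
  a ≠ ⊤ ∧ ∀ x y m : A, IsGLB ({x, y} : Set A) m → a = m → a = x ∨ a = y

/-- `ê(a) = {x ∈ Irr(A) : a ≰ x}`. -/
def ehat {A : Type*} [SemilatticeSup A] [OrderTop A] (a : A) : Set A :=
  {x | IrrElt x ∧ ¬ a ≤ x}

/-- `N(S(A))`: the downsets `U` of the poset `Irr(A)` such that the set of
irreducibles not in `U` has a greatest lower bound in `A` (the empty meet
being `1`). -/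
def NSA (A : Type*) [SemilatticeSup A] [OrderTop A] : Set (Set A) :=
  {U | (∀ x ∈ U, IrrElt x) ∧
    (∀ x ∈ U, ∀ y : A, IrrElt y → y ≤ x → y ∈ U) ∧
    ∃ m : A, IsGLB {x : A | IrrElt x ∧ x ∉ U} m}


theorem glb_pair {A : Type*} [SemilatticeSup A] {x y m : A} (h : IsGLB ({x, y} : Set A) m) :
    m ≤ x ∧ m ≤ y ∧ ∀ z, z ≤ x → z ≤ y → z ≤ m := by
  refine ⟨h.1 (by simp), h.1 (by simp), fun z hx hy => h.2 ?_⟩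
  rintro w (rfl | rfl) <;> assumption

theorem irr_prime {A : Type*} [SemilatticeSup A] [OrderTop A]
    (hm : HasPartialMeets A) (hd : UpsetDistrib A) {x a b m : A} (hx : IrrElt x)
    (h : IsGLB ({a, b} : Set A) m) (hmx : m ≤ x) : a ≤ x ∨ b ≤ x := by
  obtain ⟨ma, mb, hg⟩ := glb_pair h
  obtain ⟨w, hw⟩ := hm (x ⊔ a) (x ⊔ b) ⟨x, le_sup_left, le_sup_left⟩
  obtain ⟨wa, wb, hwg⟩ := glb_pair hw
  have xw : x ≤ w := hwg x le_sup_left le_sup_left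
  have mw : m ≤ w := hmx.trans xw
  obtain ⟨p, hp⟩ := hm w a ⟨m, mw, ma⟩
  obtain ⟨pw, pa, hpg⟩ := glb_pair hp
  have mp : m ≤ p := hpg m mw ma
  have e1 : w = x ⊔ p := by
    refine hd m w x a w x p mw hmx ma ?_ ?_ hp
    · refine ⟨?_, fun z hz => hz (by simp)⟩
      rintro z (rfl | rfl)
      exacts [le_rfl, wa]
    · refine ⟨?_, fun z hz => hz (by simp)⟩
      rintro z (rfl | rfl)
      exacts [xw, le_rfl]
  obtain ⟨q, hq⟩ := hm p x ⟨m, mp, hmx⟩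
  obtain ⟨r, hr⟩ := hm p b ⟨m, mp, mb⟩
  have e2 : p = q ⊔ r := by
    refine hd m p x b p q r mp hmx mb ?_ hq hr
    refine ⟨?_, fun z hz => hz (by simp)⟩
    rintro z (rfl | rfl)
    exacts [le_rfl, pw.trans wb]
  obtain ⟨_, qx, _⟩ := glb_pair hq
  obtain ⟨rp, rb, _⟩ := glb_pair hr
  have px : p ≤ x := by
    rw [e2]
    exact sup_le qx ((hg r (rp.trans pa) rb).trans hmx)
  have wx : x = w := le_antisymm xw (e1 ▸ sup_le le_rfl px)
  rcases hx.2 _ _ _ hw wx with h1 | h1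
  · left; rw [h1]; exact le_sup_right
  · right; rw [h1]; exact le_sup_right

theorem irr_sep {A : Type*} [SemilatticeSup A] [OrderTop A] [Finite A] {a b : A}
    (h : ¬ a ≤ b) : ∃ x, IrrElt x ∧ b ≤ x ∧ ¬ a ≤ x := by
  obtain ⟨x, hx⟩ := (Set.toFinite {x : A | b ≤ x ∧ ¬ a ≤ x}).exists_maximal ⟨b, le_rfl, h⟩
  refine ⟨x, ⟨?_, ?_⟩, hx.1⟩
  · rintro rfl
    exact hx.1.2 le_top
  · intro u v m hg e
    subst e
    obtain ⟨xu, xv, hgg⟩ := glb_pair hg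
    by_contra! hc
    have key : ∀ u, x ≤ u → x ≠ u → a ≤ u := by
      intro u hu hne
      by_contra hau
      exact hne (le_antisymm hu (hx.2 ⟨hx.1.1.trans hu, hau⟩ hu))
    exact hx.1.2 (hgg a (key u xu hc.1) (key v xv hc.2))

theorem fin_glb {A : Type*} [SemilatticeSup A] [OrderTop A]
    (hm : HasPartialMeets A) (hd : UpsetDistrib A) (m : A) {s : Set A} (hs : s.Finite) :
    m ∈ lowerBounds s → ∃ g, IsGLB s g ∧ ∀ x, IrrElt x → g ≤ x → ∃ f ∈ s, f ≤ x := by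
  induction s, hs using Set.Finite.induction_on with
  | empty =>
    intro _
    exact ⟨⊤, by simp, fun x hx h => absurd (top_le_iff.1 h) hx.1⟩
  | @insert a s _ _ ih =>
    intro hl
    obtain ⟨g, hg, hp⟩ := ih fun y hy => hl (Set.mem_insert_of_mem _ hy)
    obtain ⟨k, hk⟩ := hm a g
      ⟨m, hl (Set.mem_insert _ _), hg.2 fun y hy => hl (Set.mem_insert_of_mem _ hy)⟩
    obtain ⟨ka, kg, hkk⟩ := glb_pair hk
    refine ⟨k, ⟨?_, fun z hz => hkk z (hz (Set.mem_insert _ _))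
      (hg.2 fun y hy => hz (Set.mem_insert_of_mem _ hy))⟩, ?_⟩
    · rintro y (rfl | hy)
      exacts [ka, kg.trans (hg.1 hy)]
    · intro x hx hkx
      rcases irr_prime hm hd hx hk hkx with h | h
      · exact ⟨a, Set.mem_insert _ _, h⟩
      · obtain ⟨f, hf, hfx⟩ := hp x hx h
        exact ⟨f, Set.mem_insert_of_mem _ hf, hfx⟩

/-- discrete representation: for a finite distributive
nearlattice `A`, the map `ê : a ↦ {x ∈ Irr(A) : a ≰ x}` is an order isomorphism
from `A` onto `⟨N(S(A)), ⊆⟩`; in particular it turns `∨` into `∪`, sends `1` to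
the top of `N(S(A))`, and turns existing meets into intersections. -/
theorem discrete_representation {A : Type*} [SemilatticeSup A] [OrderTop A]
    [Finite A] (hm : HasPartialMeets A) (hd : UpsetDistrib A) :
    (∀ a : A, ehat a ∈ NSA A) ∧
      Function.Injective (ehat : A → Set A) ∧
      (∀ U ∈ NSA A, ∃ a : A, U = ehat a) ∧
      (∀ a b : A, a ≤ b ↔ ehat a ⊆ ehat b) ∧
      (∀ a b : A, ehat (a ⊔ b) = ehat a ∪ ehat b) ∧
      (∀ U ∈ NSA A, U ⊆ ehat (⊤ : A)) ∧
      (∀ a b m : A, IsGLB ({a, b} : Set A) m → ehat m = ehat a ∩ ehat b) := by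
  have hle : ∀ a b : A, a ≤ b ↔ ehat a ⊆ ehat b := by
    intro a b
    refine ⟨fun h x hx => ⟨hx.1, fun hb => hx.2 (h.trans hb)⟩, fun h => ?_⟩
    by_contra hab
    obtain ⟨x, hx, bx, ax⟩ := irr_sep hab
    exact (h ⟨hx, ax⟩).2 bx
  refine ⟨?_, ?_, ?_, hle, ?_, ?_, ?_⟩
  · intro a
    refine ⟨fun x hx => hx.1, fun x hx y hy hyx => ⟨hy, fun h => hx.2 (h.trans hyx)⟩, a, ?_, ?_⟩
    · rintro x ⟨hx, hxa⟩
      by_contra h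
      exact hxa ⟨hx, h⟩
    · intro l hl
      by_contra h
      obtain ⟨x, hx, ax, lx⟩ := irr_sep h
      exact lx (hl ⟨hx, fun h => h.2 ax⟩)
  · intro a b h
    exact le_antisymm ((hle a b).2 h.le) ((hle b a).2 h.ge)
  · rintro U ⟨hU, hdn, m, hg⟩
    refine ⟨m, ?_⟩
    obtain ⟨g, hg', hp⟩ := fin_glb hm hd m (Set.toFinite {x : A | IrrElt x ∧ x ∉ U}) hg.1
    have e := hg'.unique hg
    subst e
    ext x
    constructor
    · intro hx
      refine ⟨hU x hx, fun h => ?_⟩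
      obtain ⟨f, hf, hfx⟩ := hp x (hU x hx) h
      exact hf.2 (hdn x hx f hf.1 hfx)
    · rintro ⟨hx, h⟩
      by_contra hxU
      exact h (hg.1 ⟨hx, hxU⟩)
  · intro a b
    ext x
    simp only [ehat, Set.mem_setOf_eq, Set.mem_union, sup_le_iff]
    tauto
  · intro U hU x hx
    exact ⟨hU.1 x hx, fun h => (hU.1 x hx).1 (top_le_iff.1 h)⟩
  · intro a b m h
    obtain ⟨ma, mb, _⟩ := glb_pair h
    ext x
    constructor
    · rintro ⟨hx, hmx⟩
      exact ⟨⟨hx, fun h => hmx (ma.trans h)⟩, ⟨hx, fun h => hmx (mb.trans h)⟩⟩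
    · rintro ⟨⟨hx, ha⟩, ⟨_, hb⟩⟩
      exact ⟨hx, fun hmx => (irr_prime hm hd hx h hmx).elim ha hb⟩
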